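/- arXiv:1910.04401 — 3 statements merged into one kernel-verified Lean document; each statement's English description precedes it below -/
import Mathlib

section
/- Every matching market admits at least one stable matching. -/
/-- A matching market: men `M` and women `W`; each man has a strict preference
order over `W ∪ {∅}` and each woman over `M ∪ {∅}`, encoded by injective rank
functions (a strictly higher rank means strictly more preferred); `none`
plays the role of `∅` (being unmatched), and partners ranked below `none`
are unacceptable. -/
structure Market (M W : Type*) where
  mRank : M → Option W → ℕ
  wRank : W → Option M → ℕ
  mRank_inj : ∀ m, Function.Injective (mRank m)
  wRank_inj : ∀ w, Function.Injective (wRank w)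

/-- A matching: `mu` assigns each man a woman or `none`, `nu` assigns each
woman a man or `none`, and `μ(m) = w ↔ μ(w) = m`. -/
structure Matching (M W : Type*) where
  mu : M → Option W
  nu : W → Option M
  consistent : ∀ m w, mu m = some w ↔ nu w = some m

variable {M W : Type*}

/-- Every matched agent prefers their partner to `∅`. -/
def Market.IndivRational (mkt : Market M W) (μ : Matching M W) : Prop :=
  (∀ m w, μ.mu m = some w → mkt.mRank m none < mkt.mRank m (some w)) ∧
  (∀ w m, μ.nu w = some m → mkt.wRank w none < mkt.wRank w (some m))

/-- `(m, w)` is a blocking pair for `μ`: they are not matched to each other,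
`w ≻_m μ(m)` and `m ≻_w μ(w)`. -/
def Market.Blocking (mkt : Market M W) (μ : Matching M W) (m : M) (w : W) : Prop :=
  μ.mu m ≠ some w ∧
  mkt.mRank m (μ.mu m) < mkt.mRank m (some w) ∧
  mkt.wRank w (μ.nu w) < mkt.wRank w (some m)

/-- A matching is stable if it is individually rational and has no blocking pair. -/
def Market.Stable (mkt : Market M W) (μ : Matching M W) : Prop :=
  mkt.IndivRational μ ∧ ∀ m w, ¬ mkt.Blocking μ m w

/-- Woman-dominance: `μ ≥ μ'` iff every woman weakly prefers her partner in `μ`. -/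
def Market.Dom (mkt : Market M W) (μ μ' : Matching M W) : Prop :=
  ∀ w, mkt.wRank w (μ'.nu w) ≤ mkt.wRank w (μ.nu w)

/-- Strict woman-dominance: `μ > μ'`. -/
def Market.StrictDom (mkt : Market M W) (μ μ' : Matching M W) : Prop :=
  mkt.Dom μ μ' ∧ μ ≠ μ'

/-- `μ'` covers `μ` in the woman-dominance order on stable matchings. -/
def Market.Covers (mkt : Market M W) (μ' μ : Matching M W) : Prop :=
  mkt.StrictDom μ' μ ∧
  ¬ ∃ μ'' : Matching M W, mkt.Stable μ'' ∧ mkt.StrictDom μ' μ'' ∧ mkt.StrictDom μ'' μ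

/-- `μ'` is the elimination of the list `ρ = [(w_0,m_0),…,(w_{k-1},m_{k-1})]`
from `μ`: `k ≥ 2`, the women (resp. men) in `ρ` are distinct, `μ(w_i) = m_i`,
`μ'(m_i) = w_{(i+1) mod k}`, and every agent not appearing in `ρ` has the same
partner in `μ` and `μ'`. -/
def Matching.IsElimOf (μ' μ : Matching M W) (ρ : List (W × M)) : Prop :=
  2 ≤ ρ.length ∧
  (ρ.map Prod.fst).Nodup ∧ (ρ.map Prod.snd).Nodup ∧
  (∀ i : Fin ρ.length, μ.nu (ρ.get i).1 = some (ρ.get i).2) ∧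
  (∀ i : Fin ρ.length, μ'.mu (ρ.get i).2 =
    some (ρ.get ⟨(i.1 + 1) % ρ.length,
      Nat.mod_lt _ (Nat.lt_of_le_of_lt (Nat.zero_le _) i.isLt)⟩).1) ∧
  (∀ m : M, m ∉ ρ.map Prod.snd → μ'.mu m = μ.mu m) ∧
  (∀ w : W, w ∉ ρ.map Prod.fst → μ'.nu w = μ.nu w)

/-- `ρ` is a rotation exposed in `μ`: the elimination of `ρ` from `μ` is a
stable matching which covers `μ`. -/
def Market.ExposedRotation (mkt : Market M W) (μ : Matching M W) (ρ : List (W × M)) : Prop :=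
  ∃ μ' : Matching M W, Matching.IsElimOf μ' μ ρ ∧ mkt.Stable μ' ∧ mkt.Covers μ' μ

/-- `ρ` belongs to the set `Π` of all rotations, i.e. it is exposed in some
stable matching. -/
def Market.InPi (mkt : Market M W) (ρ : List (W × M)) : Prop :=
  ∃ μ : Matching M W, mkt.Stable μ ∧ mkt.ExposedRotation μ ρ

/-- The cyclically next index in a rotation. -/
def RotNext (ρ : List (W × M)) (i : Fin ρ.length) : Fin ρ.length :=
  ⟨(i.1 + 1) % ρ.length, Nat.mod_lt _ (Nat.lt_of_le_of_lt (Nat.zero_le _) i.isLt)⟩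

/-- The cyclically previous index in a rotation. -/
def RotPrev (ρ : List (W × M)) (i : Fin ρ.length) : Fin ρ.length :=
  ⟨(i.1 + ρ.length - 1) % ρ.length, Nat.mod_lt _ (Nat.lt_of_le_of_lt (Nat.zero_le _) i.isLt)⟩

/-- `ρ` moves man `m` from `w` to `w'` (i.e. `m = m_i`, `w = w_i`, `w' = w_{i+1}`). -/
def MovesManFromTo (ρ : List (W × M)) (m : M) (w w' : W) : Prop :=
  ∃ i : Fin ρ.length, (ρ.get i).2 = m ∧ (ρ.get i).1 = w ∧ (ρ.get (RotNext ρ i)).1 = w'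

/-- `ρ` moves woman `w` from `m` to `m'` (i.e. `w = w_i`, `m = m_i`, `m' = m_{i-1}`). -/
def MovesWomanFromTo (ρ : List (W × M)) (w : W) (m m' : M) : Prop :=
  ∃ i : Fin ρ.length, (ρ.get i).1 = w ∧ (ρ.get i).2 = m ∧ (ρ.get (RotPrev ρ i)).2 = m'

/-- `ρ1` is a type 1 predecessor of `ρ2`: `ρ1` moves some man `m` to a woman
`w` and the pair `(w, m)` appears in `ρ2`. -/
def Market.Type1Pred (_mkt : Market M W) (ρ1 ρ2 : List (W × M)) : Prop :=
  ∃ (w : W) (m : M), (∃ w0 : W, MovesManFromTo ρ1 m w0 w) ∧ (w, m) ∈ ρ2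

/-- `ρ1` is a type 2 predecessor of `ρ2`: `ρ1` moves some woman `w` from a man
strictly below `m` to a man strictly above `m`, and `ρ2` moves `m` from a woman
strictly above `w` to a woman strictly below `w`. -/
def Market.Type2Pred (mkt : Market M W) (ρ1 ρ2 : List (W × M)) : Prop :=
  ∃ (m : M) (w : W) (mlo mhi : M) (whi wlo : W),
    MovesWomanFromTo ρ1 w mlo mhi ∧
    mkt.wRank w (some mlo) < mkt.wRank w (some m) ∧
    mkt.wRank w (some m) < mkt.wRank w (some mhi) ∧
    MovesManFromTo ρ2 m whi wlo ∧
    mkt.mRank m (some wlo) < mkt.mRank m (some w) ∧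
    mkt.mRank m (some w) < mkt.mRank m (some whi)

/-- `ρ1` is a (type 1 or type 2) predecessor of `ρ2`; these are the edges of
the predecessor graph `G(Π)`. -/
def Market.Pred (mkt : Market M W) (ρ1 ρ2 : List (W × M)) : Prop :=
  mkt.Type1Pred ρ1 ρ2 ∨ mkt.Type2Pred ρ1 ρ2

/-- `σ` assigns each woman the more preferred of her partners in `μ` and `μ'`. -/
def Market.IsJoin (mkt : Market M W) (μ μ' σ : Matching M W) : Prop :=
  ∀ w, σ.nu w = if mkt.wRank w (μ'.nu w) ≤ mkt.wRank w (μ.nu w) then μ.nu w else μ'.nu w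

/-- `σ` assigns each woman the less preferred of her partners in `μ` and `μ'`. -/
def Market.IsMeet (mkt : Market M W) (μ μ' σ : Matching M W) : Prop :=
  ∀ w, σ.nu w = if mkt.wRank w (μ.nu w) ≤ mkt.wRank w (μ'.nu w) then μ.nu w else μ'.nu w

/-!
A state of deferred acceptance is recorded by the set `R` of pairs `(m, w)` in which `w` has
rejected `m`. Each man proposes down his list to the first woman who has not rejected him, and each
woman rejects every man she likes less than some proposer. Enlarging `R` enlarges the set of
proposals and hence the set of rejections, so by Knaster–Tarski there is a set `R` which reproduces
itself. The proposals outside such an `R` form a stable matching: an acceptable pair in `R` does not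
block because the woman holds a better proposal, and one outside `R` does not block because the man
is matched at least as well.
-/

theorem exists_option_eq_some_iff {α : Type*} {p : α → Prop}
    (hp : ∀ a b, p a → p b → a = b) : ∃ o : Option α, ∀ a, o = some a ↔ p a := by
  by_cases h : ∃ a, p a
  · obtain ⟨a, ha⟩ := h
    refine ⟨some a, fun b => ⟨?_, fun hb => congrArg some (hp a b ha hb)⟩⟩
    rintro ⟨⟩
    exact ha
  · exact ⟨none, fun a => ⟨nofun, fun ha => (h ⟨a, ha⟩).elim⟩⟩

theorem Matching.exists_of_biUnique {E : M → W → Prop} (hE : Relator.BiUnique E) :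
    ∃ μ : Matching M W, ∀ m w, μ.mu m = some w ↔ E m w := by
  choose mu hmu using fun m => exists_option_eq_some_iff fun w w' (h : E m w) (h' : E m w') =>
    hE.2 h h'
  choose nu hnu using fun w => exists_option_eq_some_iff fun m m' (h : E m w) (h' : E m' w) =>
    hE.1 h h'
  exact ⟨⟨mu, nu, fun m w => (hmu m w).trans (hnu w m).symm⟩, hmu⟩

namespace Market

variable {mkt : Market M W} {μ : Matching M W} {R : Set (M × W)} {m m' : M} {w w' : W}

/-- Mutual acceptability: each of `m` and `w` prefers the other to being unmatched. Only such pairs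
can be matched by an individually rational matching, or block one. -/
def Acceptable (mkt : Market M W) (m : M) (w : W) : Prop :=
  mkt.mRank m none < mkt.mRank m (some w) ∧ mkt.wRank w none < mkt.wRank w (some m)

theorem IndivRational.mRank_none_le (h : mkt.IndivRational μ) (m : M) :
    mkt.mRank m none ≤ mkt.mRank m (μ.mu m) := by
  cases hm : μ.mu m with
  | none => exact le_rfl
  | some w => exact (h.1 m w hm).le

theorem IndivRational.wRank_none_le (h : mkt.IndivRational μ) (w : W) :
    mkt.wRank w none ≤ mkt.wRank w (μ.nu w) := by
  cases hw : μ.nu w with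
  | none => exact le_rfl
  | some m => exact (h.2 w m hw).le

theorem IndivRational.acceptable_of_blocking (h : mkt.IndivRational μ)
    (hb : mkt.Blocking μ m w) : mkt.Acceptable m w :=
  ⟨(h.mRank_none_le m).trans_lt hb.2.1, (h.wRank_none_le w).trans_lt hb.2.2⟩

theorem indivRational_of_acceptable (h : ∀ m w, μ.mu m = some w → mkt.Acceptable m w) :
    mkt.IndivRational μ :=
  ⟨fun m w hm => (h m w hm).1, fun w m hw => (h m w ((μ.consistent m w).2 hw)).2⟩

theorem IndivRational.stable (h : mkt.IndivRational μ)
    (hdom : ∀ m w, mkt.Acceptable m w →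
      mkt.mRank m (some w) ≤ mkt.mRank m (μ.mu m) ∨ mkt.wRank w (some m) ≤ mkt.wRank w (μ.nu w)) :
    mkt.Stable μ :=
  ⟨h, fun m w hb => (hdom m w (h.acceptable_of_blocking hb)).elim hb.2.1.not_ge hb.2.2.not_ge⟩

/-- The proposals made once the pairs in `R` have been rejected: the acceptable pairs `(m, w)` such
that every acceptable woman whom `m` prefers to `w` has rejected him. A man's rejected proposals
remain proposals, which makes this set monotone in `R`. -/
def proposals (mkt : Market M W) (R : Set (M × W)) : Set (M × W) :=
  {p | mkt.Acceptable p.1 p.2 ∧ ∀ w, mkt.Acceptable p.1 w →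
    mkt.mRank p.1 (some p.2) < mkt.mRank p.1 (some w) → (p.1, w) ∈ R}

theorem proposals_mono (mkt : Market M W) : Monotone mkt.proposals :=
  fun _ _ hRS _ hp => ⟨hp.1, fun w hw hlt => hRS (hp.2 w hw hlt)⟩

/-- One round of deferred acceptance, as a monotone operator on sets of rejected pairs: a woman
rejects every man to whom she prefers one of the men proposing to her. -/
def rejections (mkt : Market M W) : Set (M × W) →o Set (M × W) where
  toFun R := {p | ∃ m, (m, p.2) ∈ mkt.proposals R ∧
    mkt.wRank p.2 (some p.1) < mkt.wRank p.2 (some m)}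
  monotone' _ _ hRS _ := fun ⟨m, hm, hlt⟩ => ⟨m, mkt.proposals_mono hRS hm, hlt⟩

/-- `mkt.Engaged R m w` says that `m` proposes to `w` and has not been rejected by her, when `R` is
the set of rejected pairs. -/
def Engaged (mkt : Market M W) (R : Set (M × W)) (m : M) (w : W) : Prop :=
  (m, w) ∈ mkt.proposals R ∧ (m, w) ∉ R

theorem Engaged.acceptable (h : mkt.Engaged R m w) : mkt.Acceptable m w :=
  h.1.1

theorem Engaged.mRank_le (h : mkt.Engaged R m w) (h' : mkt.Engaged R m w') :
    mkt.mRank m (some w') ≤ mkt.mRank m (some w) :=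
  not_lt.1 fun hlt => h'.2 (h.1.2 w' h'.acceptable hlt)

theorem Engaged.wRank_le (hR : mkt.rejections R ⊆ R) (h : mkt.Engaged R m w)
    (h' : mkt.Engaged R m' w) : mkt.wRank w (some m') ≤ mkt.wRank w (some m) :=
  not_lt.1 fun hlt => h.2 (hR ⟨m', h'.1, hlt⟩)

theorem biUnique_engaged (hR : mkt.rejections R ⊆ R) : Relator.BiUnique (mkt.Engaged R) where
  left _ _ w h h' := Option.some_injective _ <| mkt.wRank_inj w <|
    (h'.wRank_le hR h).antisymm (h.wRank_le hR h')
  right m _ _ h h' := Option.some_injective _ <| mkt.mRank_inj m <|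
    (h'.mRank_le h).antisymm (h.mRank_le h')

theorem exists_engaged_mRank_le (hfin : {w | mkt.Acceptable m w}.Finite)
    (hacc : mkt.Acceptable m w) (hmw : (m, w) ∉ R) :
    ∃ w', mkt.Engaged R m w' ∧ mkt.mRank m (some w) ≤ mkt.mRank m (some w') := by
  obtain ⟨w', ⟨hacc', hmw'⟩, hmax⟩ :=
    Set.exists_max_image {w | mkt.Acceptable m w ∧ (m, w) ∉ R} (fun w => mkt.mRank m (some w))
      (hfin.subset fun _ => And.left) ⟨w, hacc, hmw⟩
  have hprop : (m, w') ∈ mkt.proposals R :=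
    ⟨hacc', fun v hv hlt => by_contra fun hmv => (hmax v ⟨hv, hmv⟩).not_gt hlt⟩
  exact ⟨w', ⟨hprop, hmw'⟩, hmax w ⟨hacc, hmw⟩⟩

theorem exists_engaged_wRank_lt (hR : R ⊆ mkt.rejections R)
    (hfin : {m | mkt.Acceptable m w}.Finite) (hmw : (m, w) ∈ R) :
    ∃ m', mkt.Engaged R m' w ∧ mkt.wRank w (some m) < mkt.wRank w (some m') := by
  obtain ⟨m₁, hm₁, hlt⟩ := hR hmw
  obtain ⟨m', hm', hmax⟩ :=
    Set.exists_max_image {m | (m, w) ∈ mkt.proposals R} (fun m => mkt.wRank w (some m))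
      (hfin.subset fun _ => And.left) ⟨m₁, hm₁⟩
  have hheld : (m', w) ∉ R := fun hrej =>
    let ⟨m₂, hm₂, hlt₂⟩ := hR hrej
    (hmax m₂ hm₂).not_gt hlt₂
  exact ⟨m', ⟨hm', hheld⟩, hlt.trans_le (hmax m₁ hm₁)⟩

theorem stable_of_forall_mu_eq_some_iff_engaged (hR : R ⊆ mkt.rejections R)
    (hM : ∀ m, {w | mkt.Acceptable m w}.Finite) (hW : ∀ w, {m | mkt.Acceptable m w}.Finite)
    (hμ : ∀ m w, μ.mu m = some w ↔ mkt.Engaged R m w) : mkt.Stable μ := by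
  refine (indivRational_of_acceptable fun m w h => ((hμ m w).1 h).acceptable).stable
    fun m w hacc => ?_
  by_cases hmw : (m, w) ∈ R
  · obtain ⟨m', heng, hlt⟩ := exists_engaged_wRank_lt hR (hW w) hmw
    have hnu : μ.nu w = some m' := (μ.consistent m' w).1 ((hμ m' w).2 heng)
    exact .inr (hnu ▸ hlt.le)
  · obtain ⟨w', heng, hle⟩ := exists_engaged_mRank_le (hM m) hacc hmw
    exact .inl ((hμ m w').2 heng ▸ hle)

end Market

theorem exists_stable_matching_general (mkt : Market M W)
    (hM : ∀ m, {w | mkt.Acceptable m w}.Finite) (hW : ∀ w, {m | mkt.Acceptable m w}.Finite) :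
    ∃ μ : Matching M W, mkt.Stable μ := by
  have hfix : mkt.rejections mkt.rejections.lfp = mkt.rejections.lfp := mkt.rejections.map_lfp
  obtain ⟨μ, hμ⟩ := Matching.exists_of_biUnique (Market.biUnique_engaged hfix.le)
  exact ⟨μ, Market.stable_of_forall_mu_eq_some_iff_engaged hfix.ge hM hW hμ⟩

/-- Every matching market admits at least one stable matching. -/
theorem exists_stable_matching {M W : Type*} [Fintype M] [Fintype W] (mkt : Market M W) :
    ∃ μ : Matching M W, mkt.Stable μ :=
  exists_stable_matching_general mkt (fun _ => Set.toFinite _) fun _ => Set.toFinite _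
end

section
/- The man-optimal stable matching is woman-pessimal: if μ0 is a stable matching such that every man m has μ0(m) ⪰_m μ(m) for every stable matching μ, then for every stable matching μ and every woman w, μ(w) ⪰_w μ0(w). -/
variable {M W : Type*}

namespace Market

theorem IndivRational.wRank_none_le_nu {mkt : Market M W} {μ : Matching M W}
    (h : mkt.IndivRational μ) (w : W) : mkt.wRank w none ≤ mkt.wRank w (μ.nu w) := by
  cases hw : μ.nu w with
  | none => exact le_rfl
  | some m => exact (h.2 w m hw).le

theorem wRank_some_le_nu_of_not_blocking {mkt : Market M W} {μ : Matching M W} {m : M} {w : W}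
    (h : ¬ mkt.Blocking μ m w) (hm : mkt.mRank m (μ.mu m) ≤ mkt.mRank m (some w)) :
    mkt.wRank w (some m) ≤ mkt.wRank w (μ.nu w) := by
  by_cases hmw : μ.mu m = some w
  · exact (congrArg (mkt.wRank w) ((μ.consistent m w).1 hmw)).ge
  · have hlt : mkt.mRank m (μ.mu m) < mkt.mRank m (some w) :=
      hm.lt_of_ne ((mkt.mRank_inj m).ne hmw)
    exact not_lt.1 fun hw => h ⟨hmw, hlt, hw⟩

end Market

theorem man_optimal_is_woman_pessimal_general (mkt : Market M W) (μ0 μ : Matching M W)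
    (hμ : mkt.Stable μ) (hmen : ∀ m : M, mkt.mRank m (μ.mu m) ≤ mkt.mRank m (μ0.mu m)) :
    mkt.Dom μ μ0 := by
  intro w
  cases hw : μ0.nu w with
  | none => exact hμ.1.wRank_none_le_nu w
  | some m =>
    have hm : μ0.mu m = some w := (μ0.consistent m w).2 hw
    exact Market.wRank_some_le_nu_of_not_blocking (hμ.2 m w) (hm ▸ hmen m)

/-- The man-optimal stable matching is woman-pessimal. -/
theorem man_optimal_is_woman_pessimal {M W : Type*} [Fintype M] [Fintype W]
    (mkt : Market M W) (μ0 : Matching M W) (h0 : mkt.Stable μ0)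
    (hopt : ∀ μ : Matching M W, mkt.Stable μ →
      ∀ m : M, mkt.mRank m (μ.mu m) ≤ mkt.mRank m (μ0.mu m)) :
    ∀ μ : Matching M W, mkt.Stable μ →
      ∀ w : W, mkt.wRank w (μ0.nu w) ≤ mkt.wRank w (μ.nu w) :=
  fun μ hμ => man_optimal_is_woman_pessimal_general mkt μ0 μ hμ (hopt μ hμ)
end

section
/- The set of stable matchings of a matching market, ordered by woman-dominance, is a distributive lattice: the join of two stable matchings μ, μ' is the stable matching μ∨μ' giving each woman her more preferred of μ(w), μ'(w), the meet is the stable matching μ∧μ' giving each woman her less preferred of μ(w), μ'(w), and these operations satisfy μ1 ∧ (μ2 ∨ μ3) = (μ1 ∧ μ2) ∨ (μ1 ∧ μ3) and μ1 ∨ (μ2 ∧ μ3) = (μ1 ∨ μ2) ∧ (μ1 ∨ μ3). -/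
variable {M W : Type*}

/-!
Let `μ` and `μ'` be stable. If a woman strictly prefers her `μ`-partner, that man strictly prefers
`μ'`, as otherwise the two would block `μ'`; dually, if a man strictly prefers his `μ'`-partner,
that woman strictly prefers `μ`. So `μ` injects the women who prefer `μ` into the men who prefer
`μ'`, and `μ'` injects these men back into these women. As soon as one side of the market is finite,
both injections are bijections, and therefore two partners in `μ` always have opposite preferences
between `μ` and `μ'`. Hence giving every woman the better and every man the worse of their two
partners is a matching. It is stable, and exchanging the roles of men and women yields the meet.
Ranks turn join and meet into pointwise `max` and `min`, which are distributive.
-/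

section Choice

variable {α β : Type*} [LinearOrder β] {f : α → β}

theorem ite_le_eq_iff (hf : f.Injective) {a b c : α} :
    (if f a ≤ f b then a else b) = c ↔ a = c ∧ f a ≤ f b ∨ b = c ∧ f b ≤ f a := by
  rcases lt_trichotomy (f a) (f b) with h | h | h
  · simp [h.le, h.not_ge]
  · simp [hf h]
  · simp [h.le, h.not_ge]

theorem ite_ge_eq_iff (hf : f.Injective) {a b c : α} :
    (if f b ≤ f a then a else b) = c ↔ a = c ∧ f b ≤ f a ∨ b = c ∧ f a ≤ f b :=
  ite_le_eq_iff (β := βᵒᵈ) hf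

end Choice

theorem surjective_of_injective_of_injective {α β : Type*} (hfin : Finite α ∨ Finite β)
    {f : α → β} {g : β → α} (hf : f.Injective) (hg : g.Injective) : f.Surjective := by
  rcases hfin with _ | _
  · exact (Finite.surjective_of_injective (hg.comp hf)).of_comp_left hg
  · exact (Finite.surjective_of_injective (hf.comp hg)).of_comp

namespace Matching

/-- The same matching with the roles of men and women exchanged. -/
def dual (μ : Matching M W) : Matching W M :=
  ⟨μ.nu, μ.mu, fun w m => (μ.consistent m w).symm⟩

variable {μ μ' : Matching M W}

theorem eq_of_nu_eq_some {w w' : W} {m : M} (h : μ.nu w = some m) (h' : μ.nu w' = some m) :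
    w = w' :=
  Option.some.inj (((μ.consistent m w).2 h).symm.trans ((μ.consistent m w').2 h'))

theorem ext_nu (h : μ.nu = μ'.nu) : μ = μ' := by
  have hmu : μ.mu = μ'.mu := by
    funext m
    ext w
    rw [μ.consistent, μ'.consistent, h]
  cases μ
  cases μ'
  congr

end Matching

namespace Market

/-- The same market with the roles of men and women exchanged. -/
def dual (mkt : Market M W) : Market W M :=
  ⟨mkt.wRank, mkt.mRank, mkt.wRank_inj, mkt.mRank_inj⟩

/-- The women who strictly prefer their partner in `μ` to their partner in `μ'`; the corresponding
set of men is obtained from the dual market. -/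
def womenPreferring (mkt : Market M W) (μ μ' : Matching M W) : Set W :=
  {w | mkt.wRank w (μ'.nu w) < mkt.wRank w (μ.nu w)}

variable {mkt : Market M W} {μ μ' σ : Matching M W} {m : M} {w : W}

theorem eq_of_wRank_nu_eq (h : ∀ w, mkt.wRank w (μ.nu w) = mkt.wRank w (μ'.nu w)) : μ = μ' :=
  Matching.ext_nu (funext fun w => mkt.wRank_inj w (h w))

theorem IsJoin.wRank_eq_max (h : mkt.IsJoin μ μ' σ) (w : W) :
    mkt.wRank w (σ.nu w) = max (mkt.wRank w (μ.nu w)) (mkt.wRank w (μ'.nu w)) := by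
  rw [h w, apply_ite (mkt.wRank w), max_comm, max_def]

theorem IsMeet.wRank_eq_min (h : mkt.IsMeet μ μ' σ) (w : W) :
    mkt.wRank w (σ.nu w) = min (mkt.wRank w (μ.nu w)) (mkt.wRank w (μ'.nu w)) := by
  rw [h w, apply_ite (mkt.wRank w), min_def]

theorem IsJoin.dom_iff (h : mkt.IsJoin μ μ' σ) (τ : Matching M W) :
    mkt.Dom τ σ ↔ mkt.Dom τ μ ∧ mkt.Dom τ μ' := by
  simp only [Dom, h.wRank_eq_max, max_le_iff, forall_and]

theorem IsMeet.dom_iff (h : mkt.IsMeet μ μ' σ) (τ : Matching M W) :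
    mkt.Dom σ τ ↔ mkt.Dom μ τ ∧ mkt.Dom μ' τ := by
  simp only [Dom, h.wRank_eq_min, le_min_iff, forall_and]

theorem isMeet_isJoin_distrib {μ₁ μ₂ μ₃ σ₂₃ lhs τ₁₂ τ₁₃ rhs : Matching M W}
    (hσ₂₃ : mkt.IsJoin μ₂ μ₃ σ₂₃) (hlhs : mkt.IsMeet μ₁ σ₂₃ lhs) (hτ₁₂ : mkt.IsMeet μ₁ μ₂ τ₁₂)
    (hτ₁₃ : mkt.IsMeet μ₁ μ₃ τ₁₃) (hrhs : mkt.IsJoin τ₁₂ τ₁₃ rhs) : lhs = rhs := by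
  refine eq_of_wRank_nu_eq (mkt := mkt) fun w => ?_
  rw [hlhs.wRank_eq_min, hσ₂₃.wRank_eq_max, hrhs.wRank_eq_max, hτ₁₂.wRank_eq_min,
    hτ₁₃.wRank_eq_min, min_max_distrib_left]

theorem isJoin_isMeet_distrib {μ₁ μ₂ μ₃ σ₂₃ lhs τ₁₂ τ₁₃ rhs : Matching M W}
    (hσ₂₃ : mkt.IsMeet μ₂ μ₃ σ₂₃) (hlhs : mkt.IsJoin μ₁ σ₂₃ lhs) (hτ₁₂ : mkt.IsJoin μ₁ μ₂ τ₁₂)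
    (hτ₁₃ : mkt.IsJoin μ₁ μ₃ τ₁₃) (hrhs : mkt.IsMeet τ₁₂ τ₁₃ rhs) : lhs = rhs := by
  refine eq_of_wRank_nu_eq (mkt := mkt) fun w => ?_
  rw [hlhs.wRank_eq_max, hσ₂₃.wRank_eq_min, hrhs.wRank_eq_min, hτ₁₂.wRank_eq_max,
    hτ₁₃.wRank_eq_max, max_min_distrib_left]

theorem Dom.refl (mkt : Market M W) (μ : Matching M W) : mkt.Dom μ μ :=
  fun _ => le_rfl

namespace Stable

theorem dual (h : mkt.Stable μ) : mkt.dual.Stable μ.dual :=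
  ⟨h.1.symm, fun w m hb => h.2 m w ⟨fun e => hb.1 ((μ.consistent m w).1 e), hb.2.symm⟩⟩

theorem wRank_none_le (h : mkt.Stable μ) (w : W) :
    mkt.wRank w none ≤ mkt.wRank w (μ.nu w) := by
  cases hw : μ.nu w with
  | none => exact le_rfl
  | some m => exact (h.1.2 w m hw).le

theorem mRank_lt_of_wRank_lt (h : mkt.Stable μ)
    (hlt : mkt.wRank w (μ.nu w) < mkt.wRank w (some m)) :
    mkt.mRank m (some w) < mkt.mRank m (μ.mu m) := by
  have hne : μ.mu m ≠ some w := fun e => hlt.ne (congrArg _ ((μ.consistent m w).1 e))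
  by_contra! hle
  exact h.2 m w ⟨hne, hle.lt_of_ne ((mkt.mRank_inj m).ne hne), hlt⟩

theorem exists_nu_eq_some_of_womenPreferring (h' : mkt.Stable μ')
    (w : mkt.womenPreferring μ μ') :
    ∃ m : mkt.dual.womenPreferring μ'.dual μ.dual, μ.nu w = some m.1 := by
  obtain ⟨w, hw : mkt.wRank w (μ'.nu w) < mkt.wRank w (μ.nu w)⟩ := w
  have hmatched : μ.nu w ≠ none := fun e => (h'.wRank_none_le w).not_gt (e ▸ hw)
  obtain ⟨m, hm⟩ := Option.ne_none_iff_exists'.1 hmatched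
  have hlt : mkt.mRank m (μ.mu m) < mkt.mRank m (μ'.mu m) := by
    rw [(μ.consistent m w).2 hm]
    exact h'.mRank_lt_of_wRank_lt (hm ▸ hw)
  exact ⟨⟨m, hlt⟩, hm⟩

theorem exists_womenPreferring_nu_eq_some (hfin : Finite M ∨ Finite W) (h : mkt.Stable μ)
    (h' : mkt.Stable μ') (m : mkt.dual.womenPreferring μ'.dual μ.dual) :
    ∃ w : mkt.womenPreferring μ μ', μ.nu w = some m.1 := by
  choose f hf using h'.exists_nu_eq_some_of_womenPreferring (μ := μ)
  choose g hg using h.dual.exists_nu_eq_some_of_womenPreferring (μ := μ'.dual)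
  have hf_inj : f.Injective := fun a b hab =>
    Subtype.ext (Matching.eq_of_nu_eq_some (hf a) (hab ▸ hf b))
  have hg_inj : g.Injective := fun a b hab =>
    Subtype.ext (Matching.eq_of_nu_eq_some (hg a) (hab ▸ hg b))
  have hfin' : Finite (mkt.womenPreferring μ μ') ∨
      Finite (mkt.dual.womenPreferring μ'.dual μ.dual) :=
    hfin.symm.imp (fun (_ : Finite W) => inferInstance) fun (_ : Finite M) => inferInstance
  obtain ⟨w, rfl⟩ := surjective_of_injective_of_injective hfin' hf_inj hg_inj m
  exact ⟨w, hf w⟩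

theorem mRank_le_iff_wRank_le (hfin : Finite M ∨ Finite W) (h : mkt.Stable μ)
    (h' : mkt.Stable μ') (hmw : μ.mu m = some w) :
    mkt.mRank m (μ.mu m) ≤ mkt.mRank m (μ'.mu m) ↔
      mkt.wRank w (μ'.nu w) ≤ mkt.wRank w (μ.nu w) := by
  have hwm : μ.nu w = some m := (μ.consistent m w).1 hmw
  constructor
  · intro hle
    rcases hle.lt_or_eq with hlt | heq
    · obtain ⟨⟨w', hw'⟩, hw'm⟩ := exists_womenPreferring_nu_eq_some hfin h h' ⟨m, hlt⟩
      obtain rfl : w' = w := Matching.eq_of_nu_eq_some hw'm hwm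
      exact le_of_lt hw'
    · have hwm' : μ'.nu w = some m :=
        (μ'.consistent m w).1 ((mkt.mRank_inj m heq).symm.trans hmw)
      rw [hwm, hwm']
  · contrapose!
    intro hlt
    rw [hmw] at hlt
    rw [hwm]
    exact h'.dual.mRank_lt_of_wRank_lt hlt

end Stable

theorem stable_of_isJoin_of_dual_isMeet (h : mkt.Stable μ) (h' : mkt.Stable μ')
    (hjoin : mkt.IsJoin μ μ' σ) (hmeet : mkt.dual.IsMeet μ.dual μ'.dual σ.dual) :
    mkt.Stable σ := by
  have hnu (w) : σ.nu w = μ.nu w ∨ σ.nu w = μ'.nu w := by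
    rw [hjoin w]
    exact ite_eq_or_eq ..
  have hmu (m) : σ.mu m = μ.mu m ∨ σ.mu m = μ'.mu m := by
    rw [show σ.mu m = _ from hmeet m]
    exact ite_eq_or_eq ..
  refine ⟨⟨fun m w hmw => ?_, fun w m hwm => ?_⟩, fun m w ⟨_, hm, hw⟩ => ?_⟩
  · exact (hmu m).elim (fun e => h.1.1 m w (e ▸ hmw)) (fun e => h'.1.1 m w (e ▸ hmw))
  · exact (hnu w).elim (fun e => h.1.2 w m (e ▸ hwm)) (fun e => h'.1.2 w m (e ▸ hwm))
  · rw [hjoin.wRank_eq_max, max_lt_iff] at hw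
    rcases hmu m with e | e
    · exact (e ▸ hm).not_gt (h.mRank_lt_of_wRank_lt hw.1)
    · exact (e ▸ hm).not_gt (h'.mRank_lt_of_wRank_lt hw.2)

theorem exists_stable_isJoin_dual_isMeet (hfin : Finite M ∨ Finite W) (h : mkt.Stable μ)
    (h' : mkt.Stable μ') :
    ∃ σ, mkt.Stable σ ∧ mkt.IsJoin μ μ' σ ∧ mkt.dual.IsMeet μ.dual μ'.dual σ.dual := by
  let σ : Matching M W :=
    { mu m := if mkt.mRank m (μ.mu m) ≤ mkt.mRank m (μ'.mu m) then μ.mu m else μ'.mu m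
      nu w := if mkt.wRank w (μ'.nu w) ≤ mkt.wRank w (μ.nu w) then μ.nu w else μ'.nu w
      consistent m w := by
        rw [ite_le_eq_iff (mkt.mRank_inj m), ite_ge_eq_iff (mkt.wRank_inj w),
          ← μ.consistent, ← μ'.consistent]
        exact or_congr (and_congr_right (h.mRank_le_iff_wRank_le hfin h'))
          (and_congr_right (h'.mRank_le_iff_wRank_le hfin h)) }
  have hjoin : mkt.IsJoin μ μ' σ := fun _ => rfl
  have hmeet : mkt.dual.IsMeet μ.dual μ'.dual σ.dual := fun _ => rfl
  exact ⟨σ, stable_of_isJoin_of_dual_isMeet h h' hjoin hmeet, hjoin, hmeet⟩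

theorem exists_stable_isJoin (hfin : Finite M ∨ Finite W) (h : mkt.Stable μ)
    (h' : mkt.Stable μ') : ∃ σ, mkt.IsJoin μ μ' σ ∧ mkt.Stable σ :=
  let ⟨σ, hσ, hjoin, _⟩ := exists_stable_isJoin_dual_isMeet hfin h h'
  ⟨σ, hjoin, hσ⟩

theorem exists_stable_isMeet (hfin : Finite M ∨ Finite W) (h : mkt.Stable μ)
    (h' : mkt.Stable μ') : ∃ σ, mkt.IsMeet μ μ' σ ∧ mkt.Stable σ :=
  let ⟨σ, hσ, _, hmeet⟩ := exists_stable_isJoin_dual_isMeet hfin.symm h.dual h'.dual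
  ⟨σ.dual, hmeet, hσ.dual⟩

end Market

theorem stable_matchings_distributive_lattice_general {M W : Type*}
    (mkt : Market M W) (hfin : Finite M ∨ Finite W) :
    (∀ μ μ' : Matching M W, mkt.Stable μ → mkt.Stable μ' →
      ∃ σ : Matching M W, mkt.IsJoin μ μ' σ ∧ mkt.Stable σ ∧
        mkt.Dom σ μ ∧ mkt.Dom σ μ' ∧
        ∀ τ : Matching M W, mkt.Dom τ μ → mkt.Dom τ μ' → mkt.Dom τ σ) ∧
    (∀ μ μ' : Matching M W, mkt.Stable μ → mkt.Stable μ' →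
      ∃ σ : Matching M W, mkt.IsMeet μ μ' σ ∧ mkt.Stable σ ∧
        mkt.Dom μ σ ∧ mkt.Dom μ' σ ∧
        ∀ τ : Matching M W, mkt.Dom μ τ → mkt.Dom μ' τ → mkt.Dom σ τ) ∧
    (∀ μ1 μ2 μ3 σ23 lhs τ12 τ13 rhs : Matching M W,
      mkt.IsJoin μ2 μ3 σ23 → mkt.IsMeet μ1 σ23 lhs →
      mkt.IsMeet μ1 μ2 τ12 → mkt.IsMeet μ1 μ3 τ13 → mkt.IsJoin τ12 τ13 rhs →
      lhs = rhs) ∧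
    (∀ μ1 μ2 μ3 σ23 lhs τ12 τ13 rhs : Matching M W,
      mkt.IsMeet μ2 μ3 σ23 → mkt.IsJoin μ1 σ23 lhs →
      mkt.IsJoin μ1 μ2 τ12 → mkt.IsJoin μ1 μ3 τ13 → mkt.IsMeet τ12 τ13 rhs →
      lhs = rhs) := by
  refine ⟨fun μ μ' h h' => ?_, fun μ μ' h h' => ?_, ?_, ?_⟩
  · obtain ⟨σ, hjoin, hσ⟩ := Market.exists_stable_isJoin hfin h h'
    obtain ⟨hμ, hμ'⟩ := (hjoin.dom_iff σ).1 (.refl mkt σ)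
    exact ⟨σ, hjoin, hσ, hμ, hμ', fun τ hτ hτ' => (hjoin.dom_iff τ).2 ⟨hτ, hτ'⟩⟩
  · obtain ⟨σ, hmeet, hσ⟩ := Market.exists_stable_isMeet hfin h h'
    obtain ⟨hμ, hμ'⟩ := (hmeet.dom_iff σ).1 (.refl mkt σ)
    exact ⟨σ, hmeet, hσ, hμ, hμ', fun τ hτ hτ' => (hmeet.dom_iff τ).2 ⟨hτ, hτ'⟩⟩
  · exact fun _ _ _ _ _ _ _ _ => Market.isMeet_isJoin_distrib
  · exact fun _ _ _ _ _ _ _ _ => Market.isJoin_isMeet_distrib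

/-- the stable matchings, ordered by woman-dominance, form a
distributive lattice: the join `μ∨μ'` (womanwise max) and meet `μ∧μ'`
(womanwise min) are stable, are respectively the least upper bound and the
greatest lower bound, and distribute over each other. -/
theorem stable_matchings_distributive_lattice {M W : Type*} [Fintype M] [Fintype W]
    (mkt : Market M W) :
    (∀ μ μ' : Matching M W, mkt.Stable μ → mkt.Stable μ' →
      ∃ σ : Matching M W, mkt.IsJoin μ μ' σ ∧ mkt.Stable σ ∧
        mkt.Dom σ μ ∧ mkt.Dom σ μ' ∧
        ∀ τ : Matching M W, mkt.Stable τ → mkt.Dom τ μ → mkt.Dom τ μ' → mkt.Dom τ σ) ∧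
    (∀ μ μ' : Matching M W, mkt.Stable μ → mkt.Stable μ' →
      ∃ σ : Matching M W, mkt.IsMeet μ μ' σ ∧ mkt.Stable σ ∧
        mkt.Dom μ σ ∧ mkt.Dom μ' σ ∧
        ∀ τ : Matching M W, mkt.Stable τ → mkt.Dom μ τ → mkt.Dom μ' τ → mkt.Dom σ τ) ∧
    (∀ μ1 μ2 μ3 σ23 lhs τ12 τ13 rhs : Matching M W,
      mkt.Stable μ1 → mkt.Stable μ2 → mkt.Stable μ3 →
      mkt.IsJoin μ2 μ3 σ23 → mkt.IsMeet μ1 σ23 lhs →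
      mkt.IsMeet μ1 μ2 τ12 → mkt.IsMeet μ1 μ3 τ13 → mkt.IsJoin τ12 τ13 rhs →
      lhs = rhs) ∧
    (∀ μ1 μ2 μ3 σ23 lhs τ12 τ13 rhs : Matching M W,
      mkt.Stable μ1 → mkt.Stable μ2 → mkt.Stable μ3 →
      mkt.IsMeet μ2 μ3 σ23 → mkt.IsJoin μ1 σ23 lhs →
      mkt.IsJoin μ1 μ2 τ12 → mkt.IsJoin μ1 μ3 τ13 → mkt.IsMeet τ12 τ13 rhs →
      lhs = rhs) := by
  obtain ⟨hjoin, hmeet, hdistrib, hdistrib'⟩ :=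
    stable_matchings_distributive_lattice_general mkt (.inl inferInstance)
  grind
end
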